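/- For every judgement Γ ⊢ x : A derivable in CaTT in which no term constructor appears (so x is a variable and Γ, A are GSeTT expressions), the closed λ-term ⟦Γ ⊢ x : A⟧, defined as the λ-lifting of ⟦Γ⟧_B ⊢ x : ⟦A⟧_B, is a valid term of HoTT: the judgement ⊢ ⟦Γ ⊢ x : A⟧ : ⟦Γ ⊢ A⟧ is derivable in HoTT, where ⟦Γ ⊢ A⟧ is the Π-lifting of ⟦Γ⟧_B ⊢ ⟦A⟧_B (Proposition 4.2). -/

import Mathlib

/-! ### Deep embedding of the fragment of Martin-Löf type theory ("HoTT") -/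

/-- HoTT variable names: `Sum.inl n` is the image of CaTT/GSeTT variable `n`,
`Sum.inr k` are extra HoTT-only names. -/
abbrev HVar : Type := ℕ ⊕ ℕ

/-- The fixed variable `B`, not the name of any CaTT/GSeTT variable. -/
def Bv : HVar := Sum.inr 0

mutual
/-- Pre-terms of HoTT. `J A u x y e P p` is the Paulin-Mohring eliminator with
base point `u : A`, motive `P` (with bound variables `x y e`) and base case `p`. -/
inductive HTm : Type
  | var : HVar → HTm
  | refl : HTy → HTm → HTm
  | J : HTy → HTm → HVar → HVar → HVar → HTy → HTm → HTm
  | app : HTm → HTm → HTm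
  | lam : HVar → HTy → HTm → HTm

/-- Pre-types of HoTT: the Tarski universe `univ`, `el`, identity types and Π-types. -/
inductive HTy : Type
  | univ : HTy
  | el : HTm → HTy
  | id : HTy → HTm → HTm → HTy
  | pi : HVar → HTy → HTy → HTy
end

/-- Pre-substitutions of HoTT (head = most recent binding). -/
abbrev HSubst := List (HVar × HTm)
/-- Pre-contexts of HoTT (head = most recent declaration). -/
abbrev HCtx := List (HVar × HTy)

def hlookup : HSubst → HVar → HTm
  | [], x => .var x
  | (y, t) :: γ, x => if y = x then t else hlookup γ x

/-- Remove the bindings of a bound variable from a substitution. -/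
def hdrop (γ : HSubst) (x : HVar) : HSubst := γ.filter (fun q => q.1 ≠ x)

mutual
/-- Action of substitutions on HoTT pre-terms. -/
def hsubTm : HTm → HSubst → HTm
  | .var x, γ => hlookup γ x
  | .refl A u, γ => .refl (hsubTy A γ) (hsubTm u γ)
  | .J A u x y e P p, γ =>
      .J (hsubTy A γ) (hsubTm u γ) x y e
        (hsubTy P (hdrop (hdrop (hdrop γ x) y) e)) (hsubTm p γ)
  | .app f u, γ => .app (hsubTm f γ) (hsubTm u γ)
  | .lam x A u, γ => .lam x (hsubTy A γ) (hsubTm u (hdrop γ x))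
/-- Action of substitutions on HoTT pre-types. -/
def hsubTy : HTy → HSubst → HTy
  | .univ, _ => .univ
  | .el a, γ => .el (hsubTm a γ)
  | .id A u v, γ => .id (hsubTy A γ) (hsubTm u γ) (hsubTm v γ)
  | .pi x A B, γ => .pi x (hsubTy A γ) (hsubTy B (hdrop γ x))
end

/-- Composition of HoTT substitutions. -/
def hcomp (δ γ : HSubst) : HSubst := δ.map (fun p => (p.1, hsubTm p.2 γ))

/-- The identity substitution of a context. -/
def hid (Γ : HCtx) : HSubst := Γ.map (fun p => (p.1, HTm.var p.1))

def hassoc : HCtx → HVar → Option HTy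
  | [], _ => none
  | (y, A) :: Γ, x => if y = x then some A else hassoc Γ x

mutual
/-- Definitional equality of HoTT pre-terms, generated by the computation rule
`J(A,u,P,p) v refl ≡ p` together with congruence rules. -/
inductive HTmEq : HTm → HTm → Prop
  | jbeta (A : HTy) (u : HTm) (x y e : HVar) (P : HTy) (p v : HTm) (B : HTy) (w : HTm) :
      HTmEq (.app (.app (.J A u x y e P p) v) (.refl B w)) p
  | refl (u : HTm) : HTmEq u u
  | symm : HTmEq u v → HTmEq v u
  | trans : HTmEq u v → HTmEq v w → HTmEq u w
  | reflCong : HTyEq A A' → HTmEq u u' → HTmEq (.refl A u) (.refl A' u')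
  | JCong : HTyEq A A' → HTmEq u u' → HTyEq P P' → HTmEq p p' →
      HTmEq (.J A u x y e P p) (.J A' u' x y e P' p')
  | appCong : HTmEq f f' → HTmEq u u' → HTmEq (.app f u) (.app f' u')
  | lamCong : HTyEq A A' → HTmEq u u' → HTmEq (.lam x A u) (.lam x A' u')

/-- Definitional equality of HoTT pre-types. -/
inductive HTyEq : HTy → HTy → Prop
  | refl (A : HTy) : HTyEq A A
  | symm : HTyEq A B → HTyEq B A
  | trans : HTyEq A B → HTyEq B C → HTyEq A C
  | elCong : HTmEq a a' → HTyEq (.el a) (.el a')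
  | idCong : HTyEq A A' → HTmEq u u' → HTmEq v v' → HTyEq (.id A u v) (.id A' u' v')
  | piCong : HTyEq A A' → HTyEq B B' → HTyEq (.pi x A B) (.pi x A' B')
end

mutual
/-- Validity of HoTT contexts: `⊢ Γ`. -/
inductive HCtxJ : HCtx → Prop
  | nil : HCtxJ []
  | cons : HCtxJ Γ → HTyJ Γ A → HCtxJ ((x, A) :: Γ)

/-- Validity of HoTT types: `Γ ⊢ A`. -/
inductive HTyJ : HCtx → HTy → Prop
  | univ : HCtxJ Γ → HTyJ Γ .univ
  | el : HTmJ Γ a .univ → HTyJ Γ (.el a)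
  | id : HTmJ Γ u A → HTmJ Γ v A → HTyJ Γ (.id A u v)
  | pi : HTyJ Γ A → HTyJ ((x, A) :: Γ) B → HTyJ Γ (.pi x A B)
  | conv : HTyJ Γ A → HTyEq A B → HTyJ Γ B

/-- Typing of HoTT terms: `Γ ⊢ u : A`. -/
inductive HTmJ : HCtx → HTm → HTy → Prop
  | var : HCtxJ Γ → hassoc Γ x = some A → HTmJ Γ (.var x) A
  | refl : HTmJ Γ u A → HTmJ Γ (.refl A u) (.id A u u)
  | lam : HTyJ Γ A → HTmJ ((x, A) :: Γ) u B → HTmJ Γ (.lam x A u) (.pi x A B)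
  | app : HTmJ Γ f (.pi x A B) → HTmJ Γ u A → HTmJ Γ (.app f u) (hsubTy B [(x, u)])
  | J : HTyJ Γ A → HTmJ Γ u A →
      HTyJ ((e, .id A (.var x) (.var y)) :: (y, A) :: (x, A) :: Γ) P →
      HTmJ Γ p (hsubTy P [(x, u), (y, u), (e, .refl A u)]) →
      HTmJ Γ (.J A u x y e P p)
        (.pi y A (.pi e (.id A u (.var y)) (hsubTy P [(x, u)])))
  | conv : HTmJ Γ u A → HTyEq A B → HTmJ Γ u B
  | convTm : HTmJ Γ u A → HTmEq u v → HTmJ Γ v A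

/-- Typing of HoTT substitutions: `Δ ⊢ γ : Γ`. -/
inductive HSubJ : HCtx → HSubst → HCtx → Prop
  | nil : HCtxJ Δ → HSubJ Δ [] []
  | cons : HSubJ Δ γ Γ → HTyJ Γ A → HTmJ Δ t (hsubTy A γ) →
      HSubJ Δ ((x, t) :: γ) ((x, A) :: Γ)
end

mutual
/-- Iterated identity types `Idⁿ_A(u)`. -/
def idN : ℕ → HTy → HTm → HTy
  | 0, A, _ => A
  | n+1, A, u => .id (idN n A u) (reflN n A u) (reflN n A u)
/-- Iterated reflexivities `reflⁿ_{A,u}`. -/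
def reflN : ℕ → HTy → HTm → HTm
  | 0, _, u => u
  | n+1, A, u => .refl (idN n A u) (reflN n A u)
end

/-- Π-lifting `Π_Γ.A`: successively bind all variables of `Γ`. -/
def piLift : HCtx → HTy → HTy
  | [], A => A
  | (x, T) :: Γ, A => piLift Γ (.pi x T A)

/-- λ-lifting `λ_Γ.u`: successively bind all variables of `Γ`. -/
def lamLift : HCtx → HTm → HTm
  | [], u => u
  | (x, T) :: Γ, u => lamLift Γ (.lam x T u)

/-! ### The dependent type theory CaTT -/

mutual
/-- Pre-terms of CaTT: variables and coherences `coh_{Γ,A}[γ]`. -/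
inductive CTm : Type
  | var : ℕ → CTm
  | coh : CCtx → CTy → CSub → CTm
/-- Pre-types of CaTT: `⋆` and `u →_A v`. -/
inductive CTy : Type
  | obj : CTy
  | arr : CTy → CTm → CTm → CTy
/-- Pre-substitutions of CaTT. -/
inductive CSub : Type
  | nil : CSub
  | cons : CSub → ℕ → CTm → CSub
/-- Pre-contexts of CaTT. -/
inductive CCtx : Type
  | nil : CCtx
  | cons : CCtx → ℕ → CTy → CCtx
end

def clookup : CSub → ℕ → CTm
  | .nil, x => .var x
  | .cons γ y t, x => if y = x then t else clookup γ x

mutual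
/-- Action of CaTT substitutions on pre-terms; `coh_{Γ,A}[γ][δ] = coh_{Γ,A}[γ∘δ]`. -/
def csubTm : CTm → CSub → CTm
  | .var x, γ => clookup γ x
  | .coh Γ A δ, γ => .coh Γ A (ccomp δ γ)
/-- Action of CaTT substitutions on pre-types. -/
def csubTy : CTy → CSub → CTy
  | .obj, _ => .obj
  | .arr A u v, γ => .arr (csubTy A γ) (csubTm u γ) (csubTm v γ)
/-- Composition of CaTT substitutions. -/
def ccomp : CSub → CSub → CSub
  | .nil, _ => .nil
  | .cons δ x t, γ => .cons (ccomp δ γ) x (csubTm t γ)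
end

def cassoc : CCtx → ℕ → Option CTy
  | .nil, _ => none
  | .cons Γ y A, x => if y = x then some A else cassoc Γ x

/-- The set of variables declared in a CaTT context. -/
def cvarsCtx : CCtx → Finset ℕ
  | .nil => ∅
  | .cons Γ x _ => insert x (cvarsCtx Γ)

mutual
/-- Variables used by a CaTT pre-term. -/
def varTm : CTm → Finset ℕ
  | .var x => {x}
  | .coh _ _ γ => varSub γ
/-- Variables used by a CaTT pre-type. -/
def varTy : CTy → Finset ℕ
  | .obj => ∅
  | .arr A u v => varTy A ∪ varTm u ∪ varTm v
/-- Variables used by a CaTT pre-substitution. -/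
def varSub : CSub → Finset ℕ
  | .nil => ∅
  | .cons γ _ t => varSub γ ∪ varTm t
end

/-- Dimension of a CaTT type: `dim ⋆ = -1`, `dim (u →_A v) = dim A + 1`. -/
def cdim : CTy → ℤ
  | .obj => -1
  | .arr A _ _ => cdim A + 1

/-- `dim A + 1`, as a natural number. -/
def cdimN : CTy → ℕ
  | .obj => 0
  | .arr A _ _ => cdimN A + 1

/-- Dimension of a CaTT context. -/
def cdimCtx : CCtx → ℤ
  | .nil => -1
  | .cons Γ _ A => max (cdimCtx Γ) (cdim A)

/-- The auxiliary ps-context judgement `Γ ⊢_ps x : A` for CaTT contexts. -/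
inductive CPsAux : CCtx → ℕ → CTy → Prop
  | pss (x : ℕ) : CPsAux (.cons .nil x .obj) x .obj
  | pse : CPsAux Γ x A → y ∉ cvarsCtx Γ → f ∉ cvarsCtx Γ → f ≠ y →
      CPsAux (.cons (.cons Γ y A) f (.arr A (.var x) (.var y))) f (.arr A (.var x) (.var y))
  | psd : CPsAux Γ f (.arr A (.var x) (.var y)) → CPsAux Γ y A

/-- The ps-context judgement `Γ ⊢_ps` for CaTT contexts. -/
inductive CPs : CCtx → Prop
  | ps : CPsAux Γ x .obj → CPs Γ

def ctail : CCtx → CCtx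
  | .nil => .nil
  | .cons Γ _ _ => Γ

/-- The `i`-source `∂ᵢ⁻Γ` of a ps-context. -/
def csrc (i : ℤ) : CCtx → CCtx
  | .cons (.cons Δ y A) f F =>
      if cdim A + 1 ≥ i then csrc i Δ else .cons (.cons (csrc i Δ) y A) f F
  | Γ => Γ

/-- The `i`-target `∂ᵢ⁺Γ` of a ps-context. -/
def ctgt (i : ℤ) : CCtx → CCtx
  | .cons (.cons Δ y A) f F =>
      if cdim A + 1 > i then ctgt i Δ
      else if cdim A + 1 = i then .cons (ctail (ctgt i Δ)) y A
      else .cons (.cons (ctgt i Δ) y A) f F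
  | Γ => Γ

mutual
/-- `⊢ Γ` in CaTT. -/
inductive CCtxJ : CCtx → Prop
  | nil : CCtxJ .nil
  | cons : CCtxJ Γ → CTyJ Γ A → CCtxJ (.cons Γ x A)
/-- `Γ ⊢ A` in CaTT. -/
inductive CTyJ : CCtx → CTy → Prop
  | obj : CCtxJ Γ → CTyJ Γ .obj
  | arr : CTmJ Γ u A → CTmJ Γ v A → CTyJ Γ (.arr A u v)
/-- `Γ ⊢ t : A` in CaTT. -/
inductive CTmJ : CCtx → CTm → CTy → Prop
  | var : CCtxJ Γ → cassoc Γ x = some A → CTmJ Γ (.var x) A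
  | coh : CohJ Γ A → CSubJ Δ γ Γ → CTmJ Δ (.coh Γ A γ) (csubTy A γ)
/-- `Δ ⊢ γ : Γ` in CaTT. -/
inductive CSubJ : CCtx → CSub → CCtx → Prop
  | nil : CCtxJ Δ → CSubJ Δ .nil .nil
  | cons : CSubJ Δ γ Γ → CTyJ Γ A → CTmJ Δ t (csubTy A γ) →
      CSubJ Δ (.cons γ x t) (.cons Γ x A)
/-- The coherence judgement `Γ ⊢ coh A` of CaTT. -/
inductive CohJ : CCtx → CTy → Prop
  | mk (i : ℤ) : CPs Γ → (i = cdimCtx Γ - 1 ∨ i = cdimCtx Γ) →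
      CTmJ (csrc i Γ) u A → CTmJ (ctgt i Γ) v A →
      varTm u ∪ varTy A = cvarsCtx (csrc i Γ) →
      varTm v ∪ varTy A = cvarsCtx (ctgt i Γ) →
      CohJ Γ (.arr A u v)
end

/-- Predicate: a CaTT pre-term contains no `coh` constructor. -/
def nocohTm : CTm → Prop
  | .var _ => True
  | .coh _ _ _ => False

/-- Predicate: a CaTT pre-type contains no `coh` constructor. -/
def nocohTy : CTy → Prop
  | .obj => True
  | .arr A u v => nocohTy A ∧ nocohTm u ∧ nocohTm v

/-- Predicate: a CaTT pre-context contains no `coh` constructor. -/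
def nocohCtx : CCtx → Prop
  | .nil => True
  | .cons Γ _ A => nocohCtx Γ ∧ nocohTy A

/-! ### Translation of CaTT into HoTT -/

mutual
def szTm : CTm → ℕ
  | .var _ => 1
  | .coh Γ A γ => szCtx Γ + szTy A + szSub γ + 1
def szTy : CTy → ℕ
  | .obj => 1
  | .arr A u v => szTy A + szTm u + szTm v + 1
def szSub : CSub → ℕ
  | .nil => 1
  | .cons γ _ t => szSub γ + szTm t + 1
def szCtx : CCtx → ℕ
  | .nil => 1
  | .cons Γ _ A => szCtx Γ + szTy A + 1
end

lemma szSub_pos (γ : CSub) : 0 < szSub γ := by cases γ <;> simp [szSub]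
lemma szCtx_pos (Γ : CCtx) : 0 < szCtx Γ := by cases Γ <;> simp [szCtx]
lemma szTy_pos (A : CTy) : 0 < szTy A := by cases A <;> simp [szTy]

/-- The fresh HoTT variables `x'`, `y'`, `f'` used in the motives of `J`. -/
def xV : HVar := Sum.inr 1
def yV : HVar := Sum.inr 2
def fV : HVar := Sum.inr 3

mutual
/-- Translation `⟦-⟧_B` of CaTT pre-terms into HoTT pre-terms. -/
def interpTm : CTm → HTm
  | .var x => .var (Sum.inl x)
  | .coh Γ A γ => hsubTm (elim Γ A Γ (hid (interpCtx Γ))) (interpSub γ)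
termination_by t => szTm t
decreasing_by
  all_goals simp [szTm, szTy, szSub, szCtx]
  all_goals (have _h1 := szSub_pos γ; omega)
/-- Translation `⟦-⟧_B` of CaTT pre-types into HoTT pre-types. -/
def interpTy : CTy → HTy
  | .obj => .el (.var Bv)
  | .arr A u v => .id (interpTy A) (interpTm u) (interpTm v)
termination_by A => szTy A
decreasing_by
  all_goals simp [szTm, szTy, szSub, szCtx]
  all_goals omega
/-- Translation `⟦-⟧_B` of CaTT pre-substitutions (`⟦⟨⟩⟧_B = ⟨B ↦ B⟩`). -/
def interpSub : CSub → HSubst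
  | .nil => [(Bv, .var Bv)]
  | .cons γ x t => (Sum.inl x, interpTm t) :: interpSub γ
termination_by γ => szSub γ
decreasing_by
  all_goals simp [szTm, szTy, szSub, szCtx]
  all_goals omega
/-- Translation `⟦-⟧_B` of CaTT pre-contexts (`⟦∅⟧_B = (B : Type)`). -/
def interpCtx : CCtx → HCtx
  | .nil => [(Bv, .univ)]
  | .cons Γ x A => (Sum.inl x, interpTy A) :: interpCtx Γ
termination_by Γ => szCtx Γ
decreasing_by
  all_goals simp [szTm, szTy, szSub, szCtx]
  all_goals omega
/-- The auxiliary operation `elim_B(Δ, A, Γ, γ)`, defined by induction on the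
ps-context `Δ`, which interprets coherences via iterated applications of `J`. -/
def elim : CCtx → CTy → CCtx → HSubst → HTm
  | .cons .nil x .obj, A, _, _ =>
      reflN (cdimN A) (.el (.var Bv)) (.var (Sum.inl x))
  | .cons (.cons Δ y C) f (.arr C' (.var x) v'), A, Γ, γ =>
      let iC := interpTy C
      let iΔ' := interpCtx (.cons (.cons Δ y C) f (.arr C' (.var x) v'))
      let P := hsubTy (hsubTy (interpTy A) γ)
          ((Sum.inl x, .var xV) :: (Sum.inl y, .var yV) :: (Sum.inl f, .var fV) :: hid iΔ')
      let p := elim Δ A Γ (hcomp γ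
          ((Sum.inl y, .var (Sum.inl x)) ::
           (Sum.inl f, .refl iC (.var (Sum.inl x))) :: hid (interpCtx Δ)))
      .app (.app (.J iC (.var (Sum.inl x)) xV yV fV P p) (.var (Sum.inl y))) (.var (Sum.inl f))
  | _, _, _, _ => .var Bv
termination_by Δ A _ _ => szTy A + szCtx Δ
decreasing_by
  all_goals simp [szTm, szTy, szSub, szCtx]
  all_goals first
    | omega
    | (have _h2 := szCtx_pos Δ; omega)
    | (have _h3 := szTy_pos A; omega)
end

/-- The translation `⟦coh_{Γ,A}⟧_B = elim_B(Γ, A, Γ, id_{⟦Γ⟧_B})` of a coherence. -/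
def interpCoh (Γ : CCtx) (A : CTy) : HTm := elim Γ A Γ (hid (interpCtx Γ))

mutual
/-- Free variables of an HoTT pre-term. -/
def hfvTm : HTm → Finset HVar
  | .var x => {x}
  | .refl A u => hfvTy A ∪ hfvTm u
  | .J A u x y e P p => hfvTy A ∪ hfvTm u ∪ (hfvTy P \ {x, y, e}) ∪ hfvTm p
  | .app f u => hfvTm f ∪ hfvTm u
  | .lam x A u => hfvTy A ∪ (hfvTm u \ {x})
/-- Free variables of an HoTT pre-type. -/
def hfvTy : HTy → Finset HVar
  | .univ => ∅
  | .el a => hfvTm a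
  | .id A u v => hfvTy A ∪ hfvTm u ∪ hfvTm v
  | .pi x A B => hfvTy A ∪ (hfvTy B \ {x})
end

/-- The variables bound by an HoTT context. -/
def hctxVars (Γ : HCtx) : Finset HVar := (Γ.map Prod.fst).toFinset


lemma hassoc_Bv (Γ : CCtx) : hassoc (interpCtx Γ) Bv = some .univ := by
  match Γ with
  | .nil => simp [interpCtx, hassoc]
  | .cons Γ y C =>
    rw [interpCtx, hassoc, if_neg (by simp [Bv])]
    exact hassoc_Bv Γ

lemma hassoc_interpCtx (Γ : CCtx) (x : ℕ) (A : CTy) (h : cassoc Γ x = some A) :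
    hassoc (interpCtx Γ) (Sum.inl x) = some (interpTy A) := by
  match Γ with
  | .nil => simp [cassoc] at h
  | .cons Γ y C =>
    rw [interpCtx, hassoc]
    rw [cassoc] at h
    by_cases hxy : y = x
    · simp_all
    · have hne : ¬ ((Sum.inl y : HVar) = Sum.inl x) := fun e => hxy (Sum.inl.inj e)
      rw [if_neg hxy] at h
      rw [if_neg hne]
      exact hassoc_interpCtx Γ x A h

mutual
theorem ctx_valid {Γ : CCtx} (h : CCtxJ Γ) (hΓ : nocohCtx Γ) : HCtxJ (interpCtx Γ) := by
  match h with
  | .nil =>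
    rw [interpCtx]
    exact .cons .nil (.univ .nil)
  | .cons h1 h2 =>
    rw [interpCtx]
    exact .cons (ctx_valid h1 hΓ.1) (ty_valid h2 hΓ.1 hΓ.2)
theorem ty_valid {Γ : CCtx} {A : CTy} (h : CTyJ Γ A) (hΓ : nocohCtx Γ) (hA : nocohTy A) :
    HTyJ (interpCtx Γ) (interpTy A) := by
  match h with
  | .obj h1 =>
    rw [interpTy]
    exact .el (.var (ctx_valid h1 hΓ) (hassoc_Bv _))
  | .arr h1 h2 =>
    rw [interpTy]
    exact .id (tm_valid h1 hΓ hA.2.1) (tm_valid h2 hΓ hA.2.2)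
theorem tm_valid {Γ : CCtx} {t : CTm} {A : CTy} (h : CTmJ Γ t A) (hΓ : nocohCtx Γ)
    (ht : nocohTm t) : HTmJ (interpCtx Γ) (interpTm t) (interpTy A) := by
  match h with
  | .var h1 h2 =>
    rw [interpTm]
    exact .var (ctx_valid h1 hΓ) (hassoc_interpCtx _ _ _ h2)
  | .coh _ _ => exact ht.elim
end

theorem lift_valid (Γ : HCtx) (u : HTm) (A : HTy) (hΓ : HCtxJ Γ) (h : HTmJ Γ u A) :
    HTmJ [] (lamLift Γ u) (piLift Γ A) := by
  induction Γ generalizing u A with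
  | nil => exact h
  | cons p Γ ih =>
    obtain ⟨x, T⟩ := p
    cases hΓ with
    | cons h1 h2 => exact ih _ _ h1 (.lam h2 h)

/-- Proposition 4.2. -/
theorem stmt10 (Γ : CCtx) (x : ℕ) (A : CTy) (h : CTmJ Γ (.var x) A)
    (hΓ : nocohCtx Γ) (hA : nocohTy A) :
    HTmJ [] (lamLift (interpCtx Γ) (interpTm (.var x)))
      (piLift (interpCtx Γ) (interpTy A)) := by 
  refine lift_valid _ _ _ ?_ (tm_valid h hΓ trivial)
  cases h with
  | var h1 _ => exact ctx_valid h1 hΓ
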